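/- Let n ≥ 1 and k ≥ 1 be integers, fix a primitive (n+1)-th root of unity ζ ∈ ℂ, and assume that there is no tuple I = (I₀, …, I_n) ∈ ℕ^{n+1} with I₀ + ⋯ + I_n = k and Σ_{i=0}^{n} I_i·ζ^i = 0 (this holds, for example, when n+1 is prime and (n+1) ∤ k, and it implies gcd(k, n+1) = 1). Define θ : P_k → P_k by θ(f) = z·∂f/∂z + D(f). Then θ is injective, its cokernel is a finite-dimensional ℂ-vector space, and (n+1)·dim_ℂ coker(θ) equals the binomial coefficient C(n+k, n). -/

import Mathlib

/-!
Give `z` the weight `n + 1` and `x_i` the weight `i + 1`, and filter `P_k` by the finite-dimensional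
spaces `F_w` of polynomials of weight less than `w`. The derivation `D` raises weights by one and
`z ∂/∂z` preserves them, so `D` is the leading part of `θ`.

On a weight space of `P_k` the derivation `D` is injective: a weighted homogeneous polynomial is
determined by its value at `z = 1`, where `D` becomes the derivation permuting the `x_i` cyclically.
In the coordinates `y_j` with `x_i = Σ_j ζ^{ij} y_j` it multiplies `y^I` by `Σ_j I_j ζ^j`, which is
nonzero for `|I| = k`. Hence `θ` is injective on `P_k`, and `θ f ∈ F_{w+1}` forces `f ∈ F_w`.

Consequently `F_{w+1} ∩ θ F_{w+1} = θ F_w`, and `F_{w+1} + θ F_{w+1} ⊆ F_{w+2}` shows that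
`w ↦ dim F_w` is convex. Multiplication by `z` embeds `F_w` into `F_{w+n+1}`, and for large `w` the
`C(n+k, n)` monomials free of `z` span a complement of the image. A convex sequence that grows by
`C(n+k, n)` over every `n + 1` steps is linear of slope `C(n+k, n) / (n + 1)`. The inclusion above
is then an equality for large `w`, so that the cokernel is `F_{w+1} / θ F_w`, and its dimension is
the slope.
-/

open MvPolynomial

/-- We model `R = ℂ[z][x₀, …, x_n]` as `MvPolynomial (Fin (n+2)) ℂ`, the variable of index
`0` playing the role of `z` and the variable of index `i+1` playing the role of `x_i`.
These are the values on the variables of the derivation `D` with `D(z) = 0` (so `D` is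
`ℂ[z]`-linear), `D(x_i) = x_{i+1}` for `0 ≤ i ≤ n-1`, and `D(x_n) = z·x₀`. -/
noncomputable def kloostermanDvals (n : ℕ) : Fin (n + 2) → MvPolynomial (Fin (n + 2)) ℂ :=
  fun j =>
    if (j : ℕ) = 0 then 0
    else if h : (j : ℕ) + 1 < n + 2 then MvPolynomial.X ⟨(j : ℕ) + 1, h⟩
    else MvPolynomial.X 0 * MvPolynomial.X 1

/-- The operator `θ(f) = z·∂f/∂z + D(f)`. -/
noncomputable def kloostermanTheta (n : ℕ) :
    MvPolynomial (Fin (n + 2)) ℂ →ₗ[ℂ] MvPolynomial (Fin (n + 2)) ℂ :=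
  LinearMap.mulLeft ℂ (MvPolynomial.X 0) ∘ₗ (MvPolynomial.pderiv 0).toLinearMap +
    (MvPolynomial.mkDerivation ℂ (kloostermanDvals n)).toLinearMap

/-- `P_k`: polynomials homogeneous of total degree `k` in the variables `x₀, …, x_n`
(the variable `z` carrying weight `0`). -/
noncomputable def kloostermanPk (n k : ℕ) : Submodule ℂ (MvPolynomial (Fin (n + 2)) ℂ) :=
  MvPolynomial.weightedHomogeneousSubmodule ℂ (fun j => if (j : ℕ) = 0 then 0 else 1) k

open Module (finrank)
open Filter (atTop eventually_atTop)

/-! ### Operators with injective symbol -/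

section Convex

lemma eventually_mul_sub_eq_of_convex {c : ℕ → ℤ} {N : ℕ} {B : ℤ}
    (hconvex : Monotone fun w => c (w + 1) - c w)
    (hperiod : ∀ᶠ w in atTop, c (w + N) = c w + B) :
    ∀ᶠ w in atTop, N * (c (w + 1) - c w) = B := by
  obtain ⟨w₀, hw₀⟩ := eventually_atTop.mp hperiod
  refine eventually_atTop.mpr ⟨w₀, fun w hw => ?_⟩
  have slope_add : ∀ i ≤ N, c (w + i + 1) - c (w + i) = c (w + 1) - c w := by
    intro i hi
    have lower : c (w + 1) - c w ≤ c (w + i + 1) - c (w + i) := hconvex (Nat.le_add_right w i)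
    have upper : c (w + i + 1) - c (w + i) ≤ c (w + N + 1) - c (w + N) := hconvex (by lia)
    have period := hw₀ w hw
    have period_succ := hw₀ (w + 1) (by lia)
    rw [show w + 1 + N = w + N + 1 by lia] at period_succ
    linarith
  have linear : ∀ i ≤ N, c (w + i) = c w + i * (c (w + 1) - c w) := by
    intro i hi
    induction i with
    | zero => simp
    | succ i ih =>
      have := slope_add i (by lia)
      rw [← add_assoc, Nat.cast_succ]
      linarith [ih (by lia)]
  linarith [linear N le_rfl, hw₀ w hw]

end Convex

/-- A linear operator `T` of degree one for an increasing filtration `F`, whose symbol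
`F (w + 1) / F w → F (w + 2) / F (w + 1)` is injective in every degree. The filtration is indexed
so that it starts with `F 0 = ⊥`. -/
structure HasInjectiveSymbol {R V : Type*} [Ring R] [AddCommGroup V] [Module R V]
    (F : ℕ → Submodule R V) (T : V →ₗ[R] V) : Prop where
  zero_eq_bot : F 0 = ⊥
  mono : Monotone F
  map_le (w : ℕ) : (F w).map T ≤ F (w + 1)
  mem_of_map_mem {w : ℕ} {f : V} : f ∈ F (w + 1) → T f ∈ F (w + 1) → f ∈ F w

namespace HasInjectiveSymbol

section Ring

variable {R V : Type*} [Ring R] [AddCommGroup V] [Module R V]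
  {F : ℕ → Submodule R V} {T : V →ₗ[R] V}

lemma mem_iSup (h : HasInjectiveSymbol F T) {f : V} : f ∈ ⨆ w, F w ↔ ∃ w, f ∈ F w :=
  Submodule.mem_iSup_of_directed F h.mono.directed_le

lemma map_iSup_le (h : HasInjectiveSymbol F T) : (⨆ w, F w).map T ≤ ⨆ w, F w := by
  rw [Submodule.map_iSup]
  exact iSup_le fun w => (h.map_le w).trans (le_iSup F (w + 1))

lemma mem_of_mem_iSup_of_map_mem (h : HasInjectiveSymbol F T) {w : ℕ} {f : V}
    (hf : f ∈ ⨆ v, F v) (hTf : T f ∈ F (w + 1)) : f ∈ F w := by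
  obtain ⟨v, hv⟩ := h.mem_iSup.mp hf
  induction v with
  | zero => exact h.mono (Nat.zero_le w) hv
  | succ v ih =>
    rcases le_or_gt (v + 1) w with hvw | hwv
    · exact h.mono hvw hv
    · exact ih (h.mem_of_map_mem hv (h.mono hwv hTf))

lemma injOn (h : HasInjectiveSymbol F T) : Set.InjOn T ↑(⨆ w, F w) := by
  intro f hf g hg hfg
  have hsub : f - g ∈ F 0 :=
    h.mem_of_mem_iSup_of_map_mem (sub_mem hf hg) (by simp [hfg])
  rwa [h.zero_eq_bot, Submodule.mem_bot, sub_eq_zero] at hsub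

lemma inf_map_iSup (h : HasInjectiveSymbol F T) (w : ℕ) :
    F (w + 1) ⊓ (⨆ v, F v).map T = (F w).map T := by
  refine le_antisymm ?_ (le_inf (h.map_le w) (Submodule.map_mono (le_iSup F w)))
  rintro _ ⟨hTf, f, hf, rfl⟩
  exact ⟨f, h.mem_of_mem_iSup_of_map_mem hf hTf, rfl⟩

lemma inf_map_succ (h : HasInjectiveSymbol F T) (w : ℕ) :
    F (w + 1) ⊓ (F (w + 1)).map T = (F w).map T := by
  refine le_antisymm ?_ (le_inf (h.map_le w) (Submodule.map_mono (h.mono w.le_succ)))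
  rw [← h.inf_map_iSup w]
  exact inf_le_inf_left (F (w + 1)) (Submodule.map_mono (le_iSup F (w + 1)))

lemma sup_map_le (h : HasInjectiveSymbol F T) (w : ℕ) :
    F (w + 1) ⊔ (F (w + 1)).map T ≤ F (w + 2) :=
  sup_le (h.mono (Nat.le_succ _)) (h.map_le _)

/-- `hsup` says that the symbol of `T` is onto in all degrees from `W` on. -/
lemma sup_map_iSup_eq (h : HasInjectiveSymbol F T) {W : ℕ}
    (hsup : ∀ w ≥ W, F (w + 1) ⊔ (F (w + 1)).map T = F (w + 2)) :
    F (W + 1) ⊔ (⨆ w, F w).map T = ⨆ w, F w := by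
  refine le_antisymm (sup_le (le_iSup F _) h.map_iSup_le) (iSup_le fun w => ?_)
  induction w with
  | zero => exact h.zero_eq_bot.trans_le bot_le
  | succ w ih =>
    rcases le_or_gt w W with hwW | hWw
    · exact (h.mono (by lia)).trans le_sup_left
    · obtain ⟨v, rfl⟩ := Nat.exists_eq_add_one.mpr (Nat.zero_lt_of_lt hWw)
      rw [← hsup v (by lia)]
      exact sup_le ih ((Submodule.map_mono (le_iSup F (v + 1))).trans le_sup_right)

end Ring

section Field

variable {K V : Type*} [Field K] [AddCommGroup V] [Module K V]
  {F : ℕ → Submodule K V} {T : V →ₗ[K] V}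

lemma finrank_map (h : HasInjectiveSymbol F T) (w : ℕ) :
    finrank K ((F w).map T) = finrank K (F w) := by
  have hinj : Function.Injective (T.domRestrict (F w)) := fun f g hfg =>
    Subtype.ext (h.injOn (le_iSup F w f.2) (le_iSup F w g.2) hfg)
  rw [← LinearMap.range_domRestrict, LinearMap.finrank_range_of_inj hinj]

variable [∀ w, FiniteDimensional K (F w)]

lemma finrank_sup_map_add (h : HasInjectiveSymbol F T) (w : ℕ) :
    finrank K ↥(F (w + 1) ⊔ (F (w + 1)).map T) + finrank K (F w) =
      finrank K (F (w + 1)) + finrank K (F (w + 1)) := by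
  have hdim := Submodule.finrank_sup_add_finrank_inf_eq (F (w + 1)) ((F (w + 1)).map T)
  rwa [h.inf_map_succ, h.finrank_map, h.finrank_map] at hdim

lemma monotone_finrank_succ_sub (h : HasInjectiveSymbol F T) :
    Monotone fun w => (finrank K (F (w + 1)) - finrank K (F w) : ℤ) := by
  refine monotone_nat_of_le_succ fun w => ?_
  have hle := Submodule.finrank_mono (h.sup_map_le w)
  have hadd := h.finrank_sup_map_add w
  lia

lemma sup_map_eq_of_finrank (h : HasInjectiveSymbol F T) {w : ℕ}
    (hw : finrank K (F (w + 2)) + finrank K (F w) =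
      finrank K (F (w + 1)) + finrank K (F (w + 1))) :
    F (w + 1) ⊔ (F (w + 1)).map T = F (w + 2) :=
  Submodule.eq_of_le_of_finrank_eq (h.sup_map_le w) (by
    have := h.finrank_sup_map_add w
    lia)

/-- By the second isomorphism theorem the cokernel is `F (W + 1) / T (F W)`. -/
lemma finite_coker_and_finrank_add (h : HasInjectiveSymbol F T) {W : ℕ}
    (hsup : F (W + 1) ⊔ (⨆ w, F w).map T = ⨆ w, F w) :
    FiniteDimensional K
      (↥(⨆ w, F w) ⧸ ((⨆ w, F w).map T).comap (⨆ w, F w).subtype) ∧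
    finrank K (↥(⨆ w, F w) ⧸ ((⨆ w, F w).map T).comap (⨆ w, F w).subtype) + finrank K (F W) =
      finrank K (F (W + 1)) := by
  have e := LinearMap.quotientInfEquivSupQuotient (F (W + 1)) ((⨆ w, F w).map T)
  rw [← Submodule.comap_inf, h.inf_map_iSup, hsup] at e
  refine ⟨e.finiteDimensional, ?_⟩
  rw [← e.finrank_eq, ← h.finrank_map W,
    ← (Submodule.comapSubtypeEquivOfLe (h.map_le W)).finrank_eq,
    Submodule.finrank_quotient_add_finrank]

/-- Injectivity of the symbol makes `w ↦ dim F w` convex; as it is also periodic up to `B`, it is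
eventually linear of slope `B / N`, so that the symbol is eventually bijective. -/
theorem finite_coker_and_mul_finrank (h : HasInjectiveSymbol F T) {N B : ℕ} (hN : 0 < N)
    (hperiod : ∀ᶠ w in atTop, finrank K (F (w + N)) = finrank K (F w) + B) :
    FiniteDimensional K
      (↥(⨆ w, F w) ⧸ ((⨆ w, F w).map T).comap (⨆ w, F w).subtype) ∧
    N * finrank K (↥(⨆ w, F w) ⧸ ((⨆ w, F w).map T).comap (⨆ w, F w).subtype) = B := by
  obtain ⟨W, hW⟩ := eventually_atTop.mp <|
    eventually_mul_sub_eq_of_convex (c := fun w => finrank K (F w)) (B := B)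
      h.monotone_finrank_succ_sub (hperiod.mono fun w hw => by exact_mod_cast hw)
  have hN' : (N : ℤ) ≠ 0 := by exact_mod_cast hN.ne'
  have hsup : ∀ w ≥ W, F (w + 1) ⊔ (F (w + 1)).map T = F (w + 2) := fun w hw =>
    h.sup_map_eq_of_finrank (by
      have := mul_left_cancel₀ hN' ((hW w hw).trans (hW (w + 1) (by lia)).symm)
      lia)
  obtain ⟨hfin, hrank⟩ := h.finite_coker_and_finrank_add (h.sup_map_iSup_eq hsup)
  refine ⟨hfin, ?_⟩
  have hslope := hW W le_rfl
  rw [← hrank] at hslope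
  push_cast at hslope
  rw [add_sub_cancel_right] at hslope
  exact_mod_cast hslope

end Field

end HasInjectiveSymbol

/-! ### Homogeneous derivations and the filtration by weight -/

section Homogeneous

variable {σ R : Type*} [CommSemiring R]

lemma isWeightedHomogeneous_weightedHomogeneousComponent {M N : Type*} [AddCommMonoid M]
    [AddCommMonoid N] {u : σ → M} {k : M} {f : MvPolynomial σ R}
    (hf : IsWeightedHomogeneous u f k) (v : σ → N) (m : N) :
    IsWeightedHomogeneous u (weightedHomogeneousComponent v m f) k := by
  classical
  intro d hd
  rw [coeff_weightedHomogeneousComponent] at hd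
  exact hf (ite_ne_right_iff.mp hd).2

lemma isWeightedHomogeneous_aeval {τ M : Type*} [AddCommMonoid M] {u : σ → M} {v : τ → M}
    {g : σ → MvPolynomial τ R} (hg : ∀ i, IsWeightedHomogeneous v (g i) (u i))
    {f : MvPolynomial σ R} {k : M} (hf : IsWeightedHomogeneous u f k) :
    IsWeightedHomogeneous v (aeval g f) k := by
  rw [f.as_sum, map_sum]
  refine IsWeightedHomogeneous.sum _ _ _ fun d hd => ?_
  rw [aeval_monomial, algebraMap_eq, ← hf (mem_support_iff.mp hd), Finsupp.weight_apply]
  exact (IsWeightedHomogeneous.prod _ _ _ fun i _ => (hg i).pow (d i)).C_mul _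

/-- The derivation `D` shifts the weights given by `u` by `e`; it suffices to know this on the
variables. -/
def IsHomogeneousDerivation (D : Derivation R (MvPolynomial σ R) (MvPolynomial σ R))
    (u : σ → ℕ) (e : ℕ) : Prop :=
  ∀ j, IsWeightedHomogeneous u (D (X j)) (u j + e)

namespace IsHomogeneousDerivation

variable {D : Derivation R (MvPolynomial σ R) (MvPolynomial σ R)} {u : σ → ℕ} {e : ℕ}

lemma isWeightedHomogeneous (hD : IsHomogeneousDerivation D u e) {f : MvPolynomial σ R} {m : ℕ}
    (hf : IsWeightedHomogeneous u f m) : IsWeightedHomogeneous u (D f) (m + e) := by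
  have hD_eq : D = mkDerivation R fun j => D (X j) := derivation_ext fun j => by simp
  rw [f.as_sum, map_sum]
  refine IsWeightedHomogeneous.sum _ _ _ fun d hd => ?_
  rw [hD_eq, mkDerivation_monomial, smul_eq_C_mul]
  refine IsWeightedHomogeneous.C_mul (IsWeightedHomogeneous.sum _ _ _ fun i hi => ?_) _
  have hweight : Finsupp.weight u (d - Finsupp.single i 1) + (u i + e) = m + e := by
    rw [← add_assoc, Finsupp.weight_sub_single_add (Finsupp.mem_support_iff.mp hi),
      hf (mem_support_iff.mp hd)]
  exact hweight ▸ (isWeightedHomogeneous_monomial u _ _ rfl).mul (hD i)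

lemma component_add (hD : IsHomogeneousDerivation D u e) (f : MvPolynomial σ R) (m : ℕ) :
    weightedHomogeneousComponent u (m + e) (D f) = D (weightedHomogeneousComponent u m f) := by
  induction f using MvPolynomial.induction_on' with
  | add p q hp hq => simp only [map_add, hp, hq]
  | monomial d c =>
    have hd := isWeightedHomogeneous_monomial u d c rfl
    have hDd := hD.isWeightedHomogeneous hd
    rcases eq_or_ne m (Finsupp.weight u d) with rfl | hm
    · rw [hd.weightedHomogeneousComponent_same, hDd.weightedHomogeneousComponent_same]
    · rw [hd.weightedHomogeneousComponent_ne m hm,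
        hDd.weightedHomogeneousComponent_ne _ (by lia), map_zero]

end IsHomogeneousDerivation

lemma isHomogeneousDerivation_X_smul_pderiv (u : σ → ℕ) (i : σ) :
    IsHomogeneousDerivation
      ((X i : MvPolynomial σ R) • pderiv (R := R) i) u 0 := by
  intro j
  rcases eq_or_ne j i with rfl | hji
  · simpa using isWeightedHomogeneous_X R u j
  · simpa [pderiv_X_of_ne hji] using isWeightedHomogeneous_zero R u _

end Homogeneous

section Filtration

variable {σ : Type*}

/-- The exponents of the monomials of `u`-weight `k` and of `v`-weight less than `w`. -/
def weightLT (u v : σ → ℕ) (k w : ℕ) : Set (σ →₀ ℕ) :=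
  {d | Finsupp.weight u d = k ∧ Finsupp.weight v d < w}

lemma finite_weightLT [Finite σ] {v : σ → ℕ} (hv : ∀ j, v j ≠ 0) (u : σ → ℕ) (k w : ℕ) :
    (weightLT u v k w).Finite :=
  (Finsupp.finite_of_nat_weight_lt v hv w).subset fun _ hd => hd.2

/-- The filtration by `v`-weight of the space of polynomials of `u`-weight `k`, indexed so that it
starts with `0`. -/
noncomputable def weightFiltration (R : Type*) [CommSemiring R] (u v : σ → ℕ) (k w : ℕ) :
    Submodule R (MvPolynomial σ R) :=
  restrictSupport R (weightLT u v k w)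

section CommSemiring

variable {R : Type*} [CommSemiring R] {u v : σ → ℕ} {k w : ℕ}

lemma monotone_weightFiltration : Monotone (weightFiltration R u v k) := fun _ _ hvw =>
  restrictSupport_mono R fun _ hd => ⟨hd.1, hd.2.trans_le hvw⟩

lemma mem_weightFiltration {f : MvPolynomial σ R} :
    f ∈ weightFiltration R u v k w ↔ IsWeightedHomogeneous u f k ∧
      ∀ d, coeff d f ≠ 0 → Finsupp.weight v d < w := by
  simp only [weightFiltration, mem_restrictSupport_iff, Set.subset_def, Finset.mem_coe,
    mem_support_iff, weightLT, Set.mem_ofPred_eq, IsWeightedHomogeneous, forall_and]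

lemma mem_weightFiltration_iff_component {f : MvPolynomial σ R} :
    f ∈ weightFiltration R u v k w ↔ IsWeightedHomogeneous u f k ∧
      ∀ m ≥ w, weightedHomogeneousComponent v m f = 0 := by
  refine mem_weightFiltration.trans <| and_congr_right fun _ =>
    ⟨fun hlt m hm => ?_, fun h d hd => ?_⟩
  · exact weightedHomogeneousComponent_eq_zero' m f fun d hd =>
      ((hlt d (mem_support_iff.mp hd)).trans_le hm).ne
  · by_contra! hwd
    refine hd ?_
    rw [← coeff_zero d, ← h _ hwd, coeff_weightedHomogeneousComponent, if_pos rfl]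

lemma weightFiltration_zero : weightFiltration R u v k 0 = ⊥ := by
  simp [Submodule.eq_bot_iff, mem_weightFiltration, MvPolynomial.ext_iff]

lemma iSup_weightFiltration (R : Type*) [CommSemiring R] (u v : σ → ℕ) (k : ℕ) :
    ⨆ w, weightFiltration R u v k w = weightedHomogeneousSubmodule R u k := by
  refine le_antisymm (iSup_le fun w f hf => (mem_weightFiltration.mp hf).1) fun f hf => ?_
  refine Submodule.mem_iSup_of_mem (weightedTotalDegree v f + 1) (mem_weightFiltration.mpr ⟨hf, ?_⟩)
  exact fun d hd => Nat.lt_succ_of_le (le_weightedTotalDegree v (mem_support_iff.mpr hd))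

end CommSemiring

lemma finite_weightFiltration [Finite σ] (R : Type*) [CommSemiring R] {v : σ → ℕ}
    (hv : ∀ j, v j ≠ 0) (u : σ → ℕ) (k w : ℕ) : Module.Finite R (weightFiltration R u v k w) :=
  haveI := (finite_weightLT hv u k w).to_subtype
  Module.Finite.of_basis (basisRestrictSupport R (weightLT u v k w))

lemma finrank_weightFiltration (R : Type*) [CommRing R] [Nontrivial R] (u v : σ → ℕ) (k w : ℕ) :
    finrank R (weightFiltration R u v k w) = (weightLT u v k w).ncard :=
  Module.finrank_eq_nat_card_basis (basisRestrictSupport R (weightLT u v k w))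

lemma hasInjectiveSymbol_weightFiltration {R : Type*} [CommRing R] {u v : σ → ℕ} {k : ℕ}
    {E D : Derivation R (MvPolynomial σ R) (MvPolynomial σ R)}
    (hEu : IsHomogeneousDerivation E u 0) (hEv : IsHomogeneousDerivation E v 0)
    (hDu : IsHomogeneousDerivation D u 0) (hDv : IsHomogeneousDerivation D v 1)
    (hD : ∀ w f, IsWeightedHomogeneous u f k → IsWeightedHomogeneous v f w → D f = 0 → f = 0) :
    HasInjectiveSymbol (weightFiltration R u v k) (E + D : Derivation R _ _).toLinearMap := by
  have component_succ (f : MvPolynomial σ R) (m : ℕ) :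
      weightedHomogeneousComponent v (m + 1) (E f + D f) =
        E (weightedHomogeneousComponent v (m + 1) f) + D (weightedHomogeneousComponent v m f) := by
    rw [map_add, hDv.component_add, ← hEv.component_add, add_zero]
  refine ⟨weightFiltration_zero, monotone_weightFiltration, fun w => ?_, fun {w f} hf hTf => ?_⟩
  · rintro _ ⟨f, hf, rfl⟩
    obtain ⟨hfk, hfw⟩ := mem_weightFiltration_iff_component.mp hf
    refine mem_weightFiltration_iff_component.mpr
      ⟨(hEu.isWeightedHomogeneous hfk).add (hDu.isWeightedHomogeneous hfk), fun m hm => ?_⟩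
    obtain ⟨m, rfl⟩ := Nat.exists_eq_add_one.mpr (Nat.zero_lt_of_lt hm)
    exact (component_succ f m).trans (by
      rw [hfw (m + 1) (by lia), hfw m (by lia), map_zero, map_zero, add_zero])
  · obtain ⟨hfk, hfw⟩ := mem_weightFiltration_iff_component.mp hf
    refine mem_weightFiltration_iff_component.mpr ⟨hfk, fun m hm => ?_⟩
    rcases hm.eq_or_lt with rfl | hm
    · refine hD w _ (isWeightedHomogeneous_weightedHomogeneousComponent hfk v w)
        (weightedHomogeneousComponent_isWeightedHomogeneous w f) ?_
      calc D (weightedHomogeneousComponent v w f)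
          = weightedHomogeneousComponent v (w + 1) (E f + D f) := by
            rw [component_succ, hfw (w + 1) le_rfl, map_zero, zero_add]
        _ = 0 := (mem_weightFiltration_iff_component.mp hTf).2 (w + 1) le_rfl
    · exact hfw m hm

lemma weightLT_add_eq_union {u v : σ → ℕ} {i : σ} (hui : u i = 0) {k w : ℕ}
    (hw : ∀ d : σ →₀ ℕ, d i = 0 → Finsupp.weight u d = k → Finsupp.weight v d < w + v i) :
    weightLT u v k (w + v i) = (· + Finsupp.single i 1) '' weightLT u v k w ∪
      {d | d i = 0 ∧ Finsupp.weight u d = k} := by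
  ext d
  constructor
  · rintro ⟨hdu, hdv⟩
    rcases eq_or_ne (d i) 0 with hdi | hdi
    · exact Or.inr ⟨hdi, hdu⟩
    · have hu := Finsupp.weight_sub_single_add (w := u) hdi
      have hv := Finsupp.weight_sub_single_add (w := v) hdi
      exact Or.inl ⟨d - Finsupp.single i 1, ⟨by lia, by lia⟩, Finsupp.sub_add_single_one_cancel hdi⟩
  · rintro (⟨d, ⟨hdu, hdv⟩, rfl⟩ | ⟨hdi, hdu⟩)
    · refine ⟨?_, ?_⟩ <;> simp only [map_add, Finsupp.weight_single, one_smul] <;> lia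
    · exact ⟨hdu, hw d hdi hdu⟩

/-- The part of `u`-weight `k` is free over the polynomials in `X i`, with the monomials that do
not involve `X i` as a basis. -/
lemma eventually_ncard_weightLT_add [Finite σ] {u v : σ → ℕ} (hv : ∀ j, v j ≠ 0) {i : σ}
    (hui : u i = 0) {k : ℕ} (hfin : {d : σ →₀ ℕ | d i = 0 ∧ Finsupp.weight u d = k}.Finite) :
    ∀ᶠ w in atTop, (weightLT u v k (w + v i)).ncard =
      (weightLT u v k w).ncard + {d : σ →₀ ℕ | d i = 0 ∧ Finsupp.weight u d = k}.ncard := by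
  obtain ⟨b, hb⟩ := (hfin.image (Finsupp.weight v)).bddAbove
  refine eventually_atTop.mpr ⟨b + 1, fun w hw => ?_⟩
  have hlt (d : σ →₀ ℕ) (hdi : d i = 0) (hdu : Finsupp.weight u d = k) :
      Finsupp.weight v d < w + v i := by
    have := hb ⟨d, ⟨hdi, hdu⟩, rfl⟩
    lia
  have hdisj : Disjoint ((· + Finsupp.single i 1) '' weightLT u v k w)
      {d | d i = 0 ∧ Finsupp.weight u d = k} := by
    rw [Set.disjoint_left]
    rintro _ ⟨d, _, rfl⟩ ⟨hdi, _⟩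
    simp at hdi
  rw [weightLT_add_eq_union hui hlt,
    Set.ncard_union_eq hdisj ((finite_weightLT hv u k w).image _) hfin,
    Set.ncard_image_of_injective _ (add_left_injective _)]

end Filtration

section Fin

variable {n : ℕ}

lemma weight_finCons (a : ℕ) (u : Fin n → ℕ) (d : Fin (n + 1) →₀ ℕ) :
    Finsupp.weight (Fin.cons a u : Fin (n + 1) → ℕ) d = d 0 * a + Finsupp.weight u d.tail := by
  simp [Finsupp.weight_eq_sum, Fin.sum_univ_succ, Finsupp.tail_apply]

lemma weight_one_eq_sum {σ : Type*} [Fintype σ] (d : σ →₀ ℕ) :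
    Finsupp.weight (1 : σ → ℕ) d = ∑ i, d i := by
  simp [Finsupp.weight_eq_sum]

lemma setOf_weight_finCons_zero_one (k : ℕ) :
    {d : Fin (n + 1) →₀ ℕ | d 0 = 0 ∧ Finsupp.weight (Fin.cons 0 1 : Fin (n + 1) → ℕ) d = k} =
      Finsupp.cons 0 '' ↑(Finset.univ.finsuppAntidiag k : Finset (Fin n →₀ ℕ)) := by
  ext d
  simp only [weight_finCons, mul_zero, zero_add, Set.mem_ofPred_eq, Set.mem_image, Finset.mem_coe,
    Finset.mem_finsuppAntidiag, Finset.subset_univ, and_true, weight_one_eq_sum]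
  constructor
  · rintro ⟨h0, hd⟩
    exact ⟨d.tail, hd, by rw [← h0, Finsupp.cons_tail]⟩
  · rintro ⟨e, he, rfl⟩
    exact ⟨Finsupp.cons_zero 0 e, by rwa [Finsupp.tail_cons]⟩

lemma ncard_setOf_weight_finCons_zero_one (n k : ℕ) :
    {d : Fin (n + 2) →₀ ℕ | d 0 = 0 ∧
      Finsupp.weight (Fin.cons 0 1 : Fin (n + 2) → ℕ) d = k}.ncard = (n + k).choose n := by
  rw [setOf_weight_finCons_zero_one,
    Set.ncard_image_of_injective _ (Finsupp.cons_right_injective 0), Set.ncard_coe_finset,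
    Finset.card_finsuppAntidiag_nat_eq_choose, Finset.card_univ, Fintype.card_fin,
    Nat.add_right_comm, Nat.add_sub_cancel, Nat.choose_symm_add]

end Fin

/-! ### Dehomogenization, linear substitutions and diagonal derivations -/

section Dehomogenize

/-- Setting the variable of index `0` equal to `1`. -/
noncomputable def dehomogenize (R : Type*) [CommSemiring R] (n : ℕ) :
    MvPolynomial (Fin (n + 1)) R →ₐ[R] MvPolynomial (Fin n) R :=
  aeval (Fin.cons 1 X)

variable {n : ℕ} {R : Type*} [CommSemiring R]

lemma dehomogenize_monomial (d : Fin (n + 1) →₀ ℕ) (c : R) :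
    dehomogenize R n (monomial d c) = monomial d.tail c := by
  rw [dehomogenize, aeval_monomial, algebraMap_eq, monomial_eq,
    Finsupp.prod_fintype _ _ (by simp), Finsupp.prod_fintype _ _ (by simp), Fin.prod_univ_succ]
  simp [Finsupp.tail_apply]

/-- The weight of a monomial determines its exponent at the variable of index `0` from the other
ones. -/
lemma coeff_tail_dehomogenize {a : ℕ} (ha : a ≠ 0) {u : Fin n → ℕ} {w : ℕ}
    {f : MvPolynomial (Fin (n + 1)) R}
    (hf : IsWeightedHomogeneous (Fin.cons a u : Fin (n + 1) → ℕ) f w) {d : Fin (n + 1) →₀ ℕ}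
    (hd : Finsupp.weight (Fin.cons a u : Fin (n + 1) → ℕ) d = w) :
    coeff d.tail (dehomogenize R n f) = coeff d f := by
  have tail_inj : ∀ e ∈ f.support, e.tail = d.tail → e = d := by
    intro e he htail
    have hweight := (hf (mem_support_iff.mp he)).trans hd.symm
    rw [weight_finCons, weight_finCons, htail, add_left_inj] at hweight
    rw [← Finsupp.cons_tail e, ← Finsupp.cons_tail d, htail,
      Nat.eq_of_mul_eq_mul_right (Nat.pos_of_ne_zero ha) hweight]
  conv_lhs => rw [f.as_sum, map_sum, coeff_sum]
  simp only [dehomogenize_monomial, coeff_monomial]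
  rw [Finset.sum_eq_single d (fun e he hed => if_neg fun h => hed (tail_inj e he h))
    (fun hd => by rw [if_pos rfl, notMem_support_iff.mp hd]), if_pos rfl]

lemma eq_zero_of_dehomogenize_eq_zero {a : ℕ} (ha : a ≠ 0) {u : Fin n → ℕ} {w : ℕ}
    {f : MvPolynomial (Fin (n + 1)) R}
    (hf : IsWeightedHomogeneous (Fin.cons a u : Fin (n + 1) → ℕ) f w)
    (hf0 : dehomogenize R n f = 0) : f = 0 := by
  ext d
  by_contra hd
  exact hd (by rw [← coeff_tail_dehomogenize ha hf (hf hd), hf0, coeff_zero, coeff_zero])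

end Dehomogenize

section Diagonal

variable {σ R : Type*}

lemma mkDerivation_smul_X_monomial [CommSemiring R] (a : σ → R) (d : σ →₀ ℕ) (c : R) :
    mkDerivation R (fun j => a j • (X j : MvPolynomial σ R)) (monomial d c) =
      monomial d (Finsupp.weight a d * c) := by
  rw [mkDerivation_monomial, Finsupp.weight_apply, Finsupp.sum, Finsupp.sum, Finset.sum_mul,
    map_sum, Finset.smul_sum]
  refine Finset.sum_congr rfl fun i hi => ?_
  rw [smul_eq_mul, mul_smul_comm, X, monomial_mul,
    Finsupp.sub_add_single_one_cancel (Finsupp.mem_support_iff.mp hi), smul_monomial, smul_monomial]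
  simp only [smul_eq_mul, nsmul_eq_mul, mul_one]
  ring_nf

lemma coeff_mkDerivation_smul_X [CommSemiring R] (a : σ → R) (f : MvPolynomial σ R) (d : σ →₀ ℕ) :
    coeff d (mkDerivation R (fun j => a j • (X j : MvPolynomial σ R)) f) =
      Finsupp.weight a d * coeff d f := by
  classical
  induction f using MvPolynomial.induction_on' with
  | add p q hp hq => simp only [map_add, coeff_add, hp, hq, mul_add]
  | monomial e c =>
    rw [mkDerivation_smul_X_monomial, coeff_monomial, coeff_monomial]
    split_ifs with h
    · rw [h]
    · rw [mul_zero]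

lemma algHom_derivation_comm [CommSemiring R] {B : Type*} [CommSemiring B] [Algebra R B]
    {φ : MvPolynomial σ R →ₐ[R] B} {D : Derivation R (MvPolynomial σ R) (MvPolynomial σ R)}
    {Δ : Derivation R B B} (hX : ∀ i, φ (D (X i)) = Δ (φ (X i))) (f : MvPolynomial σ R) :
    φ (D f) = Δ (φ f) := by
  induction f using MvPolynomial.induction_on with
  | C a => simp [← algebraMap_eq]
  | add p q hp hq => simp only [map_add, hp, hq]
  | mul_X p i hp => simp only [Derivation.leibniz, smul_eq_mul, map_add, map_mul, hp, hX]

lemma bind₁_toMvPolynomial_injective [Fintype σ] [DecidableEq σ] [CommRing R] {M : Matrix σ σ R}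
    (hM : IsUnit M.det) : Function.Injective (bind₁ M.toMvPolynomial) := by
  refine Function.LeftInverse.injective (g := bind₁ M⁻¹.toMvPolynomial) fun f => ?_
  rw [bind₁_bind₁]
  simp only [← Matrix.toMvPolynomial_mul, Matrix.mul_nonsing_inv M hM, Matrix.toMvPolynomial_one]
  exact aeval_X_left_apply f

end Diagonal

/-! ### The operator `θ` -/

section Kloosterman

/-- The degree in `x₀, …, x_n`, as a weight. -/
def xWeight (n : ℕ) : Fin (n + 2) → ℕ := Fin.cons 0 1

/-- The weight for which `D` has degree one: `n + 1` for `z` and `i + 1` for `x_i`, the shift from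
`i` to `i + 1` making all weights positive. -/
def zWeight (n : ℕ) : Fin (n + 2) → ℕ := Fin.cons (n + 1) fun i => i + 1

/-- The derivation `D` with `D(z) = 0`, `D(x_i) = x_{i+1}` for `i < n` and `D(x_n) = z·x₀`, over an
arbitrary ring of coefficients. -/
noncomputable def cyclicDerivation (R : Type*) [CommSemiring R] (n : ℕ) :
    Derivation R (MvPolynomial (Fin (n + 2)) R) (MvPolynomial (Fin (n + 2)) R) :=
  mkDerivation R <| Fin.cons 0 <|
    Fin.snoc (α := fun _ => MvPolynomial (Fin (n + 2)) R) (fun i : Fin n => X i.succ.succ)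
      (X 0 * X 1)

/-- The operator `θ = z·∂/∂z + D`, over an arbitrary ring of coefficients. -/
noncomputable def theta (R : Type*) [CommSemiring R] (n : ℕ) :
    MvPolynomial (Fin (n + 2)) R →ₗ[R] MvPolynomial (Fin (n + 2)) R :=
  ((X 0 : MvPolynomial (Fin (n + 2)) R) • pderiv 0 + cyclicDerivation R n).toLinearMap

section CommSemiring

variable {R : Type*} [CommSemiring R] {n : ℕ}

lemma cyclicDerivation_X_zero : cyclicDerivation R n (X 0) = 0 := by
  simp [cyclicDerivation]

lemma cyclicDerivation_X_castSucc (i : Fin n) :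
    cyclicDerivation R n (X i.castSucc.succ) = X i.succ.succ := by
  simp [cyclicDerivation]

lemma cyclicDerivation_X_last : cyclicDerivation R n (X (Fin.last n).succ) = X 0 * X 1 := by
  rw [cyclicDerivation, mkDerivation_X, Fin.cons_succ, Fin.snoc_last]

lemma isHomogeneousDerivation_cyclicDerivation {u : Fin (n + 2) → ℕ} {e : ℕ}
    (hsucc : ∀ i : Fin n, u i.succ.succ = u i.castSucc.succ + e)
    (hlast : u 0 + u 1 = u (Fin.last n).succ + e) :
    IsHomogeneousDerivation (cyclicDerivation R n) u e := by
  intro j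
  cases j using Fin.cases with
  | zero => exact cyclicDerivation_X_zero (R := R) ▸ isWeightedHomogeneous_zero R u _
  | succ i =>
    cases i using Fin.lastCases with
    | cast i =>
      rw [cyclicDerivation_X_castSucc, ← hsucc]
      exact isWeightedHomogeneous_X R u _
    | last =>
      rw [cyclicDerivation_X_last, ← hlast]
      exact (isWeightedHomogeneous_X R u 0).mul (isWeightedHomogeneous_X R u 1)

/-- The substitution `z = 1`, `x_i = Σ_j ζ^{ij} y_j`, which diagonalises `D` when `ζ^(n+1) = 1`. -/
noncomputable def toEigen (ζ : R) (n : ℕ) :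
    MvPolynomial (Fin (n + 2)) R →ₐ[R] MvPolynomial (Fin (n + 1)) R :=
  aeval (Fin.cons 1 fun i : Fin (n + 1) => ∑ j : Fin (n + 1), (ζ ^ (j : ℕ)) ^ (i : ℕ) • X j)

lemma toEigen_X_zero (ζ : R) : toEigen ζ n (X 0) = 1 := by
  simp [toEigen]

lemma toEigen_X_succ (ζ : R) (i : Fin (n + 1)) :
    toEigen ζ n (X i.succ) = ∑ j : Fin (n + 1), (ζ ^ (j : ℕ)) ^ (i : ℕ) • X j := by
  simp [toEigen]

lemma toEigen_cyclicDerivation {ζ : R} (hζ : ζ ^ (n + 1) = 1)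
    (f : MvPolynomial (Fin (n + 2)) R) :
    toEigen ζ n (cyclicDerivation R n f) =
      mkDerivation R (fun j : Fin (n + 1) => ζ ^ (j : ℕ) • X j) (toEigen ζ n f) := by
  refine algHom_derivation_comm (fun j => ?_) f
  cases j using Fin.cases with
  | zero => rw [cyclicDerivation_X_zero, toEigen_X_zero, map_zero, Derivation.map_one_eq_zero]
  | succ i =>
    cases i using Fin.lastCases with
    | cast i =>
      rw [cyclicDerivation_X_castSucc]
      simp [toEigen_X_succ, pow_succ, smul_smul]
    | last =>
      have hroot (j : ℕ) : (ζ ^ j) ^ n * ζ ^ j = 1 := by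
        rw [← pow_succ, ← pow_mul, mul_comm, pow_mul, hζ, one_pow]
      rw [cyclicDerivation_X_last, map_mul, toEigen_X_zero, one_mul, ← Fin.succ_zero_eq_one,
        toEigen_X_succ, toEigen_X_succ]
      simp [smul_smul, hroot]

lemma isWeightedHomogeneous_toEigen (ζ : R) {f : MvPolynomial (Fin (n + 2)) R} {k : ℕ}
    (hf : IsWeightedHomogeneous (xWeight n) f k) :
    IsWeightedHomogeneous (1 : Fin (n + 1) → ℕ) (toEigen ζ n f) k := by
  refine isWeightedHomogeneous_aeval (fun j => ?_) hf
  cases j using Fin.cases with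
  | zero => exact isWeightedHomogeneous_one R _
  | succ i =>
    exact IsWeightedHomogeneous.sum _ _ _ fun j _ => (weightedHomogeneousSubmodule R 1 1).smul_mem _
      (isWeightedHomogeneous_X R 1 j)

end CommSemiring

lemma toEigen_eq_bind₁_dehomogenize {R : Type*} [CommRing R] {n : ℕ} (ζ : R)
    (f : MvPolynomial (Fin (n + 2)) R) :
    toEigen ζ n f =
      bind₁ (Matrix.vandermonde fun j : Fin (n + 1) => ζ ^ (j : ℕ)).transpose.toMvPolynomial
        (dehomogenize R (n + 1) f) := by
  rw [← AlgHom.comp_apply]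
  refine DFunLike.congr_fun (algHom_ext fun j => ?_) f
  cases j using Fin.cases with
  | zero => simp [toEigen, dehomogenize]
  | succ i => simp [toEigen, dehomogenize, Matrix.toMvPolynomial, Matrix.vandermonde,
      ← C_mul_X_eq_monomial, smul_eq_C_mul]

variable {K : Type*} [Field K] {n : ℕ} {ζ : K}

lemma eq_zero_of_toEigen_eq_zero (hζ : IsPrimitiveRoot ζ (n + 1)) {w : ℕ}
    {f : MvPolynomial (Fin (n + 2)) K} (hf : IsWeightedHomogeneous (zWeight n) f w)
    (hf0 : toEigen ζ n f = 0) : f = 0 := by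
  have hdet : IsUnit (Matrix.vandermonde fun j : Fin (n + 1) => ζ ^ (j : ℕ)).transpose.det := by
    rw [Matrix.det_transpose, isUnit_iff_ne_zero, Matrix.det_vandermonde_ne_zero_iff]
    exact fun i j hij => Fin.ext (hζ.pow_inj i.is_lt j.is_lt hij)
  rw [toEigen_eq_bind₁_dehomogenize] at hf0
  exact eq_zero_of_dehomogenize_eq_zero n.succ_ne_zero hf
    ((map_eq_zero_iff _ (bind₁_toMvPolynomial_injective hdet)).mp hf0)

lemma eq_zero_of_cyclicDerivation_eq_zero (hζ : IsPrimitiveRoot ζ (n + 1)) {k w : ℕ}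
    (hno : ¬∃ I : Fin (n + 1) → ℕ, ∑ i, I i = k ∧ ∑ i, (I i : K) * ζ ^ (i : ℕ) = 0)
    {f : MvPolynomial (Fin (n + 2)) K} (hfk : IsWeightedHomogeneous (xWeight n) f k)
    (hfw : IsWeightedHomogeneous (zWeight n) f w) (hf : cyclicDerivation K n f = 0) : f = 0 := by
  refine eq_zero_of_toEigen_eq_zero hζ hfw (MvPolynomial.ext _ _ fun d => ?_)
  by_contra hd
  refine hno ⟨d, ?_, ?_⟩
  · rw [← isWeightedHomogeneous_toEigen ζ hfk hd, weight_one_eq_sum]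
  · have heigen := congrArg (coeff d) (toEigen_cyclicDerivation hζ.pow_eq_one f)
    rw [hf, map_zero, coeff_zero, coeff_mkDerivation_smul_X, Finsupp.weight_eq_sum] at heigen
    simpa using (mul_eq_zero.mp heigen.symm).resolve_right hd

lemma hasInjectiveSymbol_theta (hζ : IsPrimitiveRoot ζ (n + 1)) {k : ℕ}
    (hno : ¬∃ I : Fin (n + 1) → ℕ, ∑ i, I i = k ∧ ∑ i, (I i : K) * ζ ^ (i : ℕ) = 0) :
    HasInjectiveSymbol (weightFiltration K (xWeight n) (zWeight n) k) (theta K n) :=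
  hasInjectiveSymbol_weightFiltration (isHomogeneousDerivation_X_smul_pderiv _ 0)
    (isHomogeneousDerivation_X_smul_pderiv _ 0)
    (isHomogeneousDerivation_cyclicDerivation (fun _ => rfl) rfl)
    (isHomogeneousDerivation_cyclicDerivation (fun _ => rfl) rfl)
    fun _ _ => eq_zero_of_cyclicDerivation_eq_zero hζ hno

lemma zWeight_ne_zero (n : ℕ) (j : Fin (n + 2)) : zWeight n j ≠ 0 := by
  cases j using Fin.cases <;> simp [zWeight]

lemma eventually_finrank_weightFiltration_add (R : Type*) [CommRing R] [Nontrivial R]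
    (n k : ℕ) :
    ∀ᶠ w in atTop, finrank R (weightFiltration R (xWeight n) (zWeight n) k (w + (n + 1))) =
      finrank R (weightFiltration R (xWeight n) (zWeight n) k w) + (n + k).choose n := by
  simp only [finrank_weightFiltration, ← ncard_setOf_weight_finCons_zero_one n k]
  refine eventually_ncard_weightLT_add (zWeight_ne_zero n) (i := 0) rfl ?_
  rw [xWeight, setOf_weight_finCons_zero_one]
  exact (Finset.finite_toSet _).image _

end Kloosterman

theorem kloosterman_deRham_dimension_general {K : Type*} [Field K] (n k : ℕ) (ζ : K)
    (hζ : IsPrimitiveRoot ζ (n + 1))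
    (hno : ¬∃ I : Fin (n + 1) → ℕ, ∑ i, I i = k ∧ ∑ i, (I i : K) * ζ ^ (i : ℕ) = 0) :
    Set.InjOn (theta K n) (weightedHomogeneousSubmodule K (xWeight n) k) ∧
    (weightedHomogeneousSubmodule K (xWeight n) k).map (theta K n) ≤
      weightedHomogeneousSubmodule K (xWeight n) k ∧
    FiniteDimensional K
      (↥(weightedHomogeneousSubmodule K (xWeight n) k) ⧸
        ((weightedHomogeneousSubmodule K (xWeight n) k).map (theta K n)).comap
          (weightedHomogeneousSubmodule K (xWeight n) k).subtype) ∧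
    (n + 1) * finrank K
      (↥(weightedHomogeneousSubmodule K (xWeight n) k) ⧸
        ((weightedHomogeneousSubmodule K (xWeight n) k).map (theta K n)).comap
          (weightedHomogeneousSubmodule K (xWeight n) k).subtype) = (n + k).choose n := by
  have h := hasInjectiveSymbol_theta hζ hno
  have := finite_weightFiltration K (zWeight_ne_zero n) (xWeight n) k
  rw [← iSup_weightFiltration K (xWeight n) (zWeight n) k]
  exact ⟨h.injOn, h.map_iSup_le,
    h.finite_coker_and_mul_finrank n.succ_pos (eventually_finrank_weightFiltration_add K n k)⟩

lemma kloostermanPk_eq (n k : ℕ) :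
    kloostermanPk n k = weightedHomogeneousSubmodule ℂ (xWeight n) k := by
  rw [kloostermanPk]
  congr 1
  ext j
  cases j using Fin.cases <;> simp [xWeight]

lemma kloostermanTheta_eq (n : ℕ) : kloostermanTheta n = theta ℂ n := by
  have hD : mkDerivation ℂ (kloostermanDvals n) = cyclicDerivation ℂ n := by
    refine derivation_ext fun j => ?_
    rw [mkDerivation_X]
    cases j using Fin.cases with
    | zero => simp [kloostermanDvals, cyclicDerivation_X_zero]
    | succ i =>
      cases i using Fin.lastCases with
      | cast i =>
        rw [cyclicDerivation_X_castSucc]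
        simp [kloostermanDvals, Fin.ext_iff]
      | last =>
        rw [cyclicDerivation_X_last]
        simp [kloostermanDvals]
  rw [kloostermanTheta, hD]
  rfl

/-- Let `n ≥ 1`, `k ≥ 1`, `ζ` a primitive `(n+1)`-th root of unity, and
assume there is no `I ∈ ℕ^{n+1}` with `|I| = k` and `Σ_i I_i ζ^i = 0`.  Then
`θ = z∂_z + D` is injective on `P_k`, maps `P_k` into `P_k`, its cokernel on `P_k` is a
finite-dimensional `ℂ`-vector space, and `(n+1)·dim_ℂ coker(θ) = C(n+k, n)`. -/
theorem kloosterman_deRham_dimension (n k : ℕ) (hn : 1 ≤ n) (hk : 1 ≤ k) (ζ : ℂ)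
    (hζ : IsPrimitiveRoot ζ (n + 1))
    (hno : ¬∃ I : Fin (n + 1) → ℕ,
      (∑ i, I i) = k ∧ (∑ i : Fin (n + 1), (I i : ℂ) * ζ ^ (i : ℕ)) = 0) :
    Set.InjOn (kloostermanTheta n) (kloostermanPk n k) ∧
    Submodule.map (kloostermanTheta n) (kloostermanPk n k) ≤ kloostermanPk n k ∧
    FiniteDimensional ℂ
      (↥(kloostermanPk n k) ⧸
        Submodule.comap (kloostermanPk n k).subtype
          (Submodule.map (kloostermanTheta n) (kloostermanPk n k))) ∧
    (n + 1) * Module.finrank ℂ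
      (↥(kloostermanPk n k) ⧸
        Submodule.comap (kloostermanPk n k).subtype
          (Submodule.map (kloostermanTheta n) (kloostermanPk n k))) = (n + k).choose n := by
  rw [kloostermanPk_eq, kloostermanTheta_eq]
  exact kloosterman_deRham_dimension_general n k ζ hζ hno
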